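/- Let d ≥ 3 and let q_1, …, q_d be pairwise coprime positive integers. Let V, Y : ℤ^d → ℝ be Γ-periodic potentials that are Fermi isospectral. If Y is (d_1,…,d_r) separable (for some r ≥ 2 and d_1,…,d_r ≥ 1 with d_1 + ⋯ + d_r = d), then V is (d_1,…,d_r) separable. -/

import Mathlib

open scoped BigOperators
open Complex

noncomputable section

/-- The fundamental domain `W` for `Γ = q₁ℤ ⊕ ⋯ ⊕ q_dℤ`, as a type. -/
abbrev Cell (d : ℕ) (q : Fin d → ℕ) := (j : Fin d) → Fin (q j)

/-- `V : ℤ^d → ℝ` is `Γ`-periodic for `Γ = q₁ℤ ⊕ ⋯ ⊕ q_dℤ`. -/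
def IsPeriodicPotential (d : ℕ) (q : Fin d → ℕ) (V : (Fin d → ℤ) → ℝ) : Prop :=
  ∀ n γ : Fin d → ℤ, (∀ j, (q j : ℤ) ∣ γ j) → V (n + γ) = V n

/-- The discrete Fourier transform `V̂(l)`, defined for all `l ∈ ℤ^d`
(it is automatically `Γ`-periodic in `l`). -/
def dft (d : ℕ) (q : Fin d → ℕ) (V : (Fin d → ℤ) → ℝ) (l : Fin d → ℤ) : ℂ :=
  (1 / ∏ j, (q j : ℂ)) *
    ∑ n : Cell d q, (V (fun j => ((n j : ℕ) : ℤ)) : ℂ) *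
      Complex.exp (-(2 * Real.pi * Complex.I) * ∑ j, (l j : ℂ) * ((n j : ℕ) : ℂ) / (q j : ℂ))

/-- `ρ^j_m = e^{2πi m/q_j}`. -/
def rho (d : ℕ) (q : Fin d → ℕ) (j : Fin d) (m : ℤ) : ℂ :=
  Complex.exp (2 * Real.pi * Complex.I * (m : ℂ) / (q j : ℂ))

/-- The Floquet matrix `M_V(z)` (the matrix `A + B_V` of Lemma 2.7). -/
def floquetMatrix (d : ℕ) (q : Fin d → ℕ) (V : (Fin d → ℤ) → ℝ) (z : Fin d → ℂ) :
    Matrix (Cell d q) (Cell d q) ℂ := fun n n' =>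
  (if n = n' then ∑ j, (rho d q j (n j : ℕ) * z j + (rho d q j (n j : ℕ) * z j)⁻¹) else 0)
    + dft d q V (fun j => ((n j : ℕ) : ℤ) - ((n' j : ℕ) : ℤ))

/-- `P̃_V(z, λ) = det (M_V(z) − λ I)`. -/
def floquetDet (d : ℕ) (q : Fin d → ℕ) (V : (Fin d → ℤ) → ℝ) (z : Fin d → ℂ) (lam : ℂ) : ℂ :=
  Matrix.det (floquetMatrix d q V z - lam • (1 : Matrix (Cell d q) (Cell d q) ℂ))

/-- `V` and `Y` are Fermi isospectral. -/
def FermiIsospectral (d : ℕ) (q : Fin d → ℕ) (V Y : (Fin d → ℤ) → ℝ) : Prop :=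
  ∃ lam0 : ℂ,
    {z : Fin d → ℂ | (∀ j, z j ≠ 0) ∧ floquetDet d q V z lam0 = 0}
      = {z : Fin d → ℂ | (∀ j, z j ≠ 0) ∧ floquetDet d q Y z lam0 = 0}

/-- `V` and `Y` are Floquet isospectral. -/
def FloquetIsospectral (d : ℕ) (q : Fin d → ℕ) (V Y : (Fin d → ℤ) → ℝ) : Prop :=
  ∀ z : Fin d → ℂ, (∀ j, z j ≠ 0) → ∀ lam : ℂ,
    floquetDet d q V z lam = floquetDet d q Y z lam

/-- The average `[V]` of `V` over one periodicity cell. -/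
def potentialAvg (d : ℕ) (q : Fin d → ℕ) (V : (Fin d → ℤ) → ℝ) : ℝ :=
  (1 / ∏ j, (q j : ℝ)) * ∑ n : Cell d q, V (fun j => ((n j : ℕ) : ℤ))

/-- The embedding of the `j`-th block of coordinates into `Fin d`,
given block sizes `D : Fin r → ℕ` with `∑ j, D j = d`. -/
def blockEmbed {r d : ℕ} (D : Fin r → ℕ) (hsum : ∑ j, D j = d) (j : Fin r) (i : Fin (D j)) :
    Fin d :=
  ⟨(∑ k ∈ Finset.univ.filter (fun k => k < j), D k) + i.1, by
    have hj : j ∉ Finset.univ.filter (fun k => k < j) := by simp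
    have h2 : (∑ k ∈ Finset.univ.filter (fun k => k < j), D k) + D j ≤ ∑ k, D k := by
      calc (∑ k ∈ Finset.univ.filter (fun k => k < j), D k) + D j
          = ∑ k ∈ insert j (Finset.univ.filter (fun k => k < j)), D k := by
            rw [Finset.sum_insert hj, add_comm]
        _ ≤ ∑ k, D k := Finset.sum_le_sum_of_subset (Finset.subset_univ _)
    have h3 := i.2
    omega⟩

/-- `V` is `(D 0, …, D (r-1))` separable. -/
def IsSeparablePotential {r : ℕ} (d : ℕ) (D : Fin r → ℕ) (hsum : ∑ j, D j = d)
    (V : (Fin d → ℤ) → ℝ) : Prop :=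
  ∃ Vj : (j : Fin r) → (Fin (D j) → ℤ) → ℝ,
    ∀ n : Fin d → ℤ, V n = ∑ j, Vj j (fun i => n (blockEmbed D hsum j i))

/-! Choose `x` with all `x j ≠ 0`, annihilated by the characters of the rows `0` and `m` of the
Floquet matrix and by no other row, and put `z = t⁻¹ • (x + t • y)`. Every row except `0` and `m`
grows like `t⁻¹`; after normalizing these rows, the determinant extends to `t = 0`, where it is a
nonzero multiple of `(α + V̂(0) - λ) (β + V̂(0) - λ) - |V̂(m)|²`, with `α` and `β` the arbitrary
values at `y` of the two characters. By the implicit function theorem the regular zeros at `t = 0`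
are limits of zeros with `t ≠ 0`, so an inclusion of Fermi varieties becomes an inclusion of these
hyperbolas, which forces their constant terms to agree: `|V̂(m)| = |Ŷ(m)|`. Such an `x` exists as
soon as `m` has two nonzero coordinates: coprimality of the periods makes the values of the
character of row `m` at these and at a third coordinate distinct, and since two circles share at
most two points, no further character lies in the span of `1` and this one. A potential is
separable exactly when its Fourier coefficients vanish at all `m` with nonzero coordinates in two
different blocks. -/

section Persistence

open Filter Topology

theorem frequently_ne_and_eq_zero_of_hasStrictFDerivAt {𝕜 E : Type*} [NontriviallyNormedField 𝕜]
    [CompleteSpace 𝕜] [NormedAddCommGroup E] [NormedSpace 𝕜 E] [CompleteSpace E]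
    {F : 𝕜 × E → 𝕜} {F' : 𝕜 × E →L[𝕜] 𝕜} {a : 𝕜} {b u : E}
    (hF : HasStrictFDerivAt F F' (a, b)) (hu : F' (0, u) ≠ 0) (hab : F (a, b) = 0) :
    ∃ᶠ p in 𝓝 (a, b), p.1 ≠ a ∧ F p = 0 := by
  -- `p ↦ (p.1, F p)` is open at `(a, b)`, so it meets the punctured axis `{(t, 0) | t ≠ a}`.
  have hmap : map (fun p ↦ (p.1, F p)) (𝓝 (a, b)) = 𝓝 (a, F (a, b)) := by
    refine (hasStrictFDerivAt_fst.prodMk hF).map_nhds_eq_of_surj (LinearMap.range_eq_top.2 ?_)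
    rintro ⟨t, s⟩
    refine ⟨(t, 0) + ((s - F' (t, 0)) / F' (0, u)) • (0, u), Prod.ext (by simp) ?_⟩
    change F' _ = s
    rw [map_add, map_smul, smul_eq_mul, div_mul_cancel₀ _ hu, add_sub_cancel]
  have haxis : Tendsto (fun t : 𝕜 ↦ (t, (0 : 𝕜))) (𝓝[≠] a) (𝓝 (a, F (a, b))) := by
    rw [hab]
    exact ((by fun_prop : Continuous fun t : 𝕜 ↦ (t, (0 : 𝕜))).tendsto a).mono_left
      nhdsWithin_le_nhds
  have hpunctured : ∃ᶠ s in 𝓝 (a, F (a, b)), s.1 ≠ a ∧ s.2 = 0 :=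
    haxis.frequently (eventually_mem_nhdsWithin.mono fun t ht ↦ ⟨ht, rfl⟩).frequently
  rwa [← hmap, frequently_map] at hpunctured

theorem eq_zero_of_eventually_imp_eq_zero {𝕜 E : Type*} [NontriviallyNormedField 𝕜]
    [CompleteSpace 𝕜] [NormedAddCommGroup E] [NormedSpace 𝕜 E] [CompleteSpace E]
    {F G : 𝕜 × E → 𝕜} {F' : 𝕜 × E →L[𝕜] 𝕜} {a : 𝕜} {b u : E}
    (hF : HasStrictFDerivAt F F' (a, b)) (hu : F' (0, u) ≠ 0) (hab : F (a, b) = 0)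
    (hG : ContinuousAt G (a, b)) (hFG : ∀ᶠ p in 𝓝 (a, b), p.1 ≠ a → F p = 0 → G p = 0) :
    G (a, b) = 0 := by
  have hfreq : ∃ᶠ p in 𝓝 (a, b), G p = 0 :=
    ((frequently_ne_and_eq_zero_of_hasStrictFDerivAt hF hu hab).and_eventually hFG).mono
      fun p hp ↦ hp.2 hp.1.1 hp.1.2
  exact isClosed_singleton.mem_of_frequently_of_tendsto hfreq hG

end Persistence

section LinearAlgebra

open Matrix Submodule

theorem exists_dotProduct_eq_zero_and_forall_ne_zero {𝕜 σ τ κ : Type*} [Field 𝕜] [Infinite 𝕜]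
    [Finite σ] [Finite τ] [Fintype κ] {w : σ → κ → 𝕜} {f : τ → κ → 𝕜}
    (hf : ∀ i, f i ∉ span 𝕜 (Set.range w)) :
    ∃ x, (∀ s, w s ⬝ᵥ x = 0) ∧ ∀ i, f i ⬝ᵥ x ≠ 0 := by
  classical
  let L := dotProductEquiv 𝕜 κ
  obtain ⟨x, hx, hfx⟩ := Module.Dual.exists_forall_mem_ne_zero_of_forall_exists
    (⨅ s, LinearMap.ker (L (w s))) (fun i ↦ L (f i)) fun i ↦ by
      by_contra! hker
      have hmem := mem_span_of_iInf_ker_le_ker hker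
      rw [show Set.range (fun s ↦ L (w s)) = L '' Set.range w from Set.range_comp ..] at hmem
      exact hf i ((apply_mem_span_image_iff_mem_span L.injective).1 hmem)
  exact ⟨x, fun s ↦ (mem_iInf _).1 hx s, hfx⟩

theorem exists_dotProduct_eq_zero_and_eq_one {𝕜 κ : Type*} [Field 𝕜] [Infinite 𝕜] [Fintype κ]
    {v w : κ → 𝕜} (h : LinearIndependent 𝕜 ![v, w]) : ∃ u, v ⬝ᵥ u = 0 ∧ w ⬝ᵥ u = 1 := by
  have hw : w ∉ span 𝕜 {v} := fun hw ↦ by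
    obtain ⟨c, hc⟩ := mem_span_singleton.1 hw
    exact (LinearIndependent.pair_iff' (h.ne_zero 0)).1 h c hc
  obtain ⟨u, hvu, hwu⟩ := exists_dotProduct_eq_zero_and_forall_ne_zero
    (w := fun _ : Unit ↦ v) (f := fun _ : Unit ↦ w) (by simpa using hw)
  refine ⟨(w ⬝ᵥ u)⁻¹ • u, ?_, ?_⟩
  · rw [dotProduct_smul, hvu (), smul_zero]
  · rw [dotProduct_smul, smul_eq_mul, inv_mul_cancel₀ (hwu ())]

theorem exists_dotProduct_eq_and_eq {𝕜 κ : Type*} [Field 𝕜] [Infinite 𝕜] [Fintype κ]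
    {v w : κ → 𝕜} (h : LinearIndependent 𝕜 ![v, w]) (α β : 𝕜) :
    ∃ y, v ⬝ᵥ y = α ∧ w ⬝ᵥ y = β := by
  have hsymm : LinearIndependent 𝕜 ![w, v] := LinearIndependent.pair_symm_iff.1 h
  obtain ⟨a, hwa, hva⟩ := exists_dotProduct_eq_zero_and_eq_one hsymm
  obtain ⟨b, hvb, hwb⟩ := exists_dotProduct_eq_zero_and_eq_one h
  exact ⟨α • a + β • b, by simp [hva, hvb], by simp [hwa, hwb]⟩

theorem det_eq_mul_prod_of_offDiag_eq_zero {R ι : Type*} [CommRing R] [Fintype ι] [DecidableEq ι]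
    {N : Matrix ι ι R} {o m : ι} (hom : o ≠ m)
    (hN : ∀ n ∉ ({o, m} : Finset ι), ∀ n' ≠ n, N n n' = 0) :
    N.det = (N o o * N m m - N o m * N m o) * ∏ n ∈ ({o, m} : Finset ι)ᶜ, N n n := by
  let p : ι → Prop := fun n ↦ n = o ∨ n = m
  have hp (n : ι) : ¬p n ↔ n ∉ ({o, m} : Finset ι) := by simp [p]
  have hpair : Function.Bijective (![⟨o, .inl rfl⟩, ⟨m, .inr rfl⟩] : Fin 2 → {n // p n}) := by
    refine ⟨fun i j h ↦ ?_, ?_⟩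
    · fin_cases i <;> fin_cases j <;> simp_all
    · rintro ⟨n, rfl | rfl⟩
      exacts [⟨0, rfl⟩, ⟨1, rfl⟩]
  have hblock : (N.toSquareBlockProp p).det = N o o * N m m - N o m * N m o := by
    rw [← det_submatrix_equiv_self (Equiv.ofBijective _ hpair), det_fin_two]
    rfl
  have hdiag : N.toSquareBlockProp (¬p ·) = diagonal fun n : {n // ¬p n} ↦ N n n := by
    ext i j
    rcases eq_or_ne i j with rfl | hij
    · rw [diagonal_apply_eq]; rfl
    · rw [diagonal_apply_ne _ hij]
      exact hN i ((hp i).1 i.2) j (Subtype.coe_ne_coe.2 hij.symm)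
  rw [N.twoBlockTriangular_det p fun i hi j hj ↦
      hN i ((hp i).1 hi) j (fun e ↦ hi (e ▸ hj)),
    hblock, hdiag, det_diagonal,
    Finset.prod_subtype _ (fun n ↦ Finset.mem_compl.trans (hp n).symm) fun n ↦ N n n]

theorem eq_of_forall_mul_eq_imp {𝕜 : Type*} [Field 𝕜] [CharZero 𝕜] {P R a b a' b' : 𝕜}
    (h : ∀ α β, (α + a) * (β + b) = P → α + a ≠ 0 → (α + a') * (β + b') = R) : P = R := by
  have hquad : ∀ s : 𝕜, s ≠ 0 →
      (b' - b) * s ^ 2 + (P + (a' - a) * (b' - b) - R) * s + (a' - a) * P = 0 := by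
    intro s hs
    have := h (s - a) (P / s - b) (by field_simp; ring) (by simpa using hs)
    field_simp at this
    linear_combination this
  have h1 := hquad 1 one_ne_zero
  have h2 := hquad (-1) (by simp)
  have h3 := hquad 2 two_ne_zero
  have hb : b' - b = 0 := by
    linear_combination h3 / 3 - h1 / 2 + h2 / 6
  linear_combination (h1 - h2) / 2 - (a' - a) * hb

theorem single_notMem_span_one_pair {𝕜 κ : Type*} [Field 𝕜] [DecidableEq κ] {w : κ → 𝕜}
    {i j k : κ} (hi : i ≠ k) (hj : j ≠ k) (hw : w i ≠ w j) :
    Pi.single k 1 ∉ span 𝕜 {1, w} := by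
  rw [mem_span_pair]
  rintro ⟨c, e, h⟩
  have hval (i : κ) : c + e * w i = (Pi.single k 1 : κ → 𝕜) i := by simpa using congrFun h i
  have hci := hval i
  have hcj := hval j
  have hck := hval k
  rw [Pi.single_eq_of_ne hi] at hci
  rw [Pi.single_eq_of_ne hj] at hcj
  rw [Pi.single_eq_same] at hck
  have he : e = 0 := by
    have : e * (w i - w j) = 0 := by linear_combination hci - hcj
    exact (mul_eq_zero.1 this).resolve_right (sub_ne_zero.2 hw)
  simp_all

end LinearAlgebra

section Blowup

open Matrix

variable {𝕜 ι κ : Type*} [Field 𝕜] [Fintype ι] [DecidableEq ι] [Fintype κ]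

/-- The Floquet matrix with arbitrary characters `v n` in place of the roots of unity and an
arbitrary matrix `B` in place of the potential. -/
def floquetForm (v : ι → κ → 𝕜) (B : Matrix ι ι 𝕜) (z : κ → 𝕜) : Matrix ι ι 𝕜 :=
  diagonal (fun n ↦ ∑ j, (v n j * z j + (v n j * z j)⁻¹)) + B

/-- The normalization of row `n` of a Floquet matrix at `z = t⁻¹ • (x + t • y)`: the rows outside
`S` grow like `t⁻¹` and are multiplied by `t`. -/
def rowScale (S : Finset ι) (t : 𝕜) (n : ι) : 𝕜 := if n ∈ S then 1 else t

/-- The blow-up at infinity: the row-normalized Floquet matrix at `z = t⁻¹ • (x + t • y)`, where `x`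
is annihilated by the characters `v n`, `n ∈ S`. It is written so as to make sense at `t = 0`. -/
def blowup (v : ι → κ → 𝕜) (B : Matrix ι ι 𝕜) (S : Finset ι) (x : κ → 𝕜) (t : 𝕜) (y : κ → 𝕜) :
    Matrix ι ι 𝕜 :=
  diagonal (fun n ↦ (if n ∈ S then v n ⬝ᵥ y else v n ⬝ᵥ (x + t • y)) +
    rowScale S t n * (t * ∑ j, (v n j * (x + t • y) j)⁻¹)) + diagonal (rowScale S t) * B

variable {v : ι → κ → 𝕜} {B : Matrix ι ι 𝕜} {S : Finset ι} {x y : κ → 𝕜} {t : 𝕜}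

theorem blowup_eq_diagonal_mul_floquetForm (ht : t ≠ 0) (hx : ∀ n ∈ S, v n ⬝ᵥ x = 0) :
    blowup v B S x t y = diagonal (rowScale S t) * floquetForm v B (t⁻¹ • (x + t • y)) := by
  have hlin (n : ι) : rowScale S t n * v n ⬝ᵥ (t⁻¹ • (x + t • y)) =
      if n ∈ S then v n ⬝ᵥ y else v n ⬝ᵥ (x + t • y) := by
    unfold rowScale
    split_ifs with hn
    · simp [hx n hn, ht]
    · simp [mul_add, ht]
  have hinv (n : ι) : ∑ j, (v n j * (t⁻¹ • (x + t • y)) j)⁻¹ =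
      t * ∑ j, (v n j * (x + t • y) j)⁻¹ := by
    rw [Finset.mul_sum]
    refine Finset.sum_congr rfl fun j _ ↦ ?_
    rw [Pi.smul_apply, smul_eq_mul, mul_left_comm, mul_inv, inv_inv]
  rw [blowup, floquetForm, mul_add, diagonal_mul_diagonal]
  congr 2
  ext n
  rw [Finset.sum_add_distrib, mul_add, hinv, ← hlin]
  rfl

theorem det_blowup_eq_zero_iff (ht : t ≠ 0) (hx : ∀ n ∈ S, v n ⬝ᵥ x = 0) :
    (blowup v B S x t y).det = 0 ↔ (floquetForm v B (t⁻¹ • (x + t • y))).det = 0 := by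
  have hscale : ∏ n, rowScale S t n ≠ 0 := Finset.prod_ne_zero_iff.2 fun n _ ↦ by
    unfold rowScale; split_ifs <;> simp [ht]
  rw [blowup_eq_diagonal_mul_floquetForm ht hx, det_mul, det_diagonal, mul_eq_zero,
    or_iff_right hscale]

theorem det_blowup_zero {o m : ι} (hom : o ≠ m) :
    (blowup v B {o, m} x 0 y).det =
      ((v o ⬝ᵥ y + B o o) * (v m ⬝ᵥ y + B m m) - B o m * B m o) *
        ∏ n ∈ ({o, m} : Finset ι)ᶜ, v n ⬝ᵥ x := by
  have hentry (n n' : ι) : blowup v B {o, m} x 0 y n n' =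
      diagonal (fun n ↦ if n ∈ ({o, m} : Finset ι) then v n ⬝ᵥ y else v n ⬝ᵥ x) n n' +
        (if n ∈ ({o, m} : Finset ι) then 1 else 0) * B n n' := by
    simp [blowup, rowScale, diagonal_mul]
  rw [det_eq_mul_prod_of_offDiag_eq_zero hom fun n hn n' hn' ↦ by
    rw [hentry, diagonal_apply_ne _ hn'.symm, if_neg hn, zero_mul, add_zero]]
  congr 1
  · simp [hentry, hom, hom.symm]
  · refine Finset.prod_congr rfl fun n hn ↦ ?_
    have hn' := Finset.mem_compl.1 hn
    rw [hentry, diagonal_apply_eq, if_neg hn', if_neg hn', zero_mul, add_zero]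

end Blowup

section Hyperbola

open Filter Matrix Submodule Topology

variable {𝕜 ι κ : Type*} [RCLike 𝕜] [Fintype ι] [DecidableEq ι] [Fintype κ]
  {v : ι → κ → 𝕜} {A B : Matrix ι ι 𝕜} {S : Finset ι} {x y : κ → 𝕜} {o m : ι}

theorem contDiffAt_det_blowup (hv : ∀ n j, v n j ≠ 0) (hx : ∀ j, x j ≠ 0) :
    ContDiffAt 𝕜 1 (fun p : 𝕜 × (κ → 𝕜) ↦ (blowup v B S x p.1 p.2).det) (0, y) := by
  have hinv (n : ι) (j : κ) : ContDiffAt 𝕜 1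
      (fun p : 𝕜 × (κ → 𝕜) ↦ (v n j * (x + p.1 • p.2) j)⁻¹) (0, y) :=
    ContDiffAt.inv (by fun_prop) (by simp [hv, hx])
  have hscale (n : ι) : ContDiff 𝕜 1 fun p : 𝕜 × (κ → 𝕜) ↦ rowScale S p.1 n := by
    unfold rowScale; split_ifs <;> fun_prop
  have hlin (n : ι) : ContDiff 𝕜 1 fun p : 𝕜 × (κ → 𝕜) ↦
      if n ∈ S then v n ⬝ᵥ p.2 else v n ⬝ᵥ (x + p.1 • p.2) := by
    simp only [dotProduct]
    split_ifs <;> fun_prop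
  have hentry (n n' : ι) : ContDiffAt 𝕜 1
      (fun p : 𝕜 × (κ → 𝕜) ↦ blowup v B S x p.1 p.2 n n') (0, y) := by
    simp only [blowup, Matrix.add_apply, diagonal_apply, diagonal_mul]
    refine ContDiffAt.add ?_ ((hscale n).contDiffAt.mul contDiffAt_const)
    by_cases hn : n = n'
    · simp only [if_pos hn]
      exact (hlin n).contDiffAt.add ((hscale n).contDiffAt.mul
        (contDiffAt_fst.mul (ContDiffAt.sum fun j _ ↦ hinv n j)))
    · simp only [if_neg hn]
      exact contDiffAt_const
  simp only [det_apply]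
  exact ContDiffAt.sum fun σ _ ↦ (contDiffAt_prod fun n _ ↦ hentry _ _).const_smul _

theorem fderiv_det_blowup_zero (hv : ∀ n j, v n j ≠ 0) (hx : ∀ j, x j ≠ 0) (hom : o ≠ m)
    {u : κ → 𝕜} (hou : v o ⬝ᵥ u = 0) (hmu : v m ⬝ᵥ u = 1) :
    fderiv 𝕜 (fun p : 𝕜 × (κ → 𝕜) ↦ (blowup v B {o, m} x p.1 p.2).det) (0, y) (0, u) =
      (v o ⬝ᵥ y + B o o) * ∏ n ∈ ({o, m} : Finset ι)ᶜ, v n ⬝ᵥ x := by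
  set C := ∏ n ∈ ({o, m} : Finset ι)ᶜ, v n ⬝ᵥ x
  let F (p : 𝕜 × (κ → 𝕜)) : 𝕜 := (blowup v B {o, m} x p.1 p.2).det
  have hline (s : 𝕜) : F ((0, y) + s • (0, u)) = F (0, y) + (v o ⬝ᵥ y + B o o) * C * s := by
    rw [show (0, y) + s • ((0 : 𝕜), u) = (0, y + s • u) by simp]
    simp only [F, det_blowup_zero hom, dotProduct_add, dotProduct_smul, hou, hmu, smul_eq_mul]
    ring
  have hF : HasDerivAt (fun s : 𝕜 ↦ F ((0, y) + s • (0, u))) (fderiv 𝕜 F (0, y) (0, u)) 0 :=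
    ((contDiffAt_det_blowup hv hx).differentiableAt one_ne_zero).hasFDerivAt.hasLineDerivAt _
  have hslope : HasDerivAt (fun s : 𝕜 ↦ F ((0, y) + s • (0, u))) ((v o ⬝ᵥ y + B o o) * C) 0 := by
    simpa only [hline] using (hasDerivAt_const_mul _).const_add (F (0, y))
  exact hF.unique hslope

theorem hyperbola_subset_of_det_imp_det (hv : ∀ n j, v n j ≠ 0)
    (hom : LinearIndependent 𝕜 ![v o, v m]) (hker : ∀ n ∈ ({o, m} : Finset ι), v n ⬝ᵥ x = 0)
    (hx : ∀ j, x j ≠ 0) (hxn : ∀ n ∉ ({o, m} : Finset ι), v n ⬝ᵥ x ≠ 0)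
    (hAB : ∀ z, (∀ j, z j ≠ 0) → (floquetForm v A z).det = 0 → (floquetForm v B z).det = 0)
    (hy : (v o ⬝ᵥ y + A o o) * (v m ⬝ᵥ y + A m m) = A o m * A m o) (hyo : v o ⬝ᵥ y + A o o ≠ 0) :
    (v o ⬝ᵥ y + B o o) * (v m ⬝ᵥ y + B m m) = B o m * B m o := by
  have hC : ∏ n ∈ ({o, m} : Finset ι)ᶜ, v n ⬝ᵥ x ≠ 0 :=
    Finset.prod_ne_zero_iff.2 fun n hn ↦ hxn n (Finset.mem_compl.1 hn)
  have hne : o ≠ m := ne_of_apply_ne v (hom.injective.ne zero_ne_one)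
  obtain ⟨u, hou, hmu⟩ := exists_dotProduct_eq_zero_and_eq_one hom
  let F (B : Matrix ι ι 𝕜) (p : 𝕜 × (κ → 𝕜)) : 𝕜 := (blowup v B {o, m} x p.1 p.2).det
  have hF (B : Matrix ι ι 𝕜) : ContDiffAt 𝕜 1 (F B) (0, y) := contDiffAt_det_blowup hv hx
  have hslope : fderiv 𝕜 (F A) (0, y) (0, u) ≠ 0 := by
    rw [fderiv_det_blowup_zero hv hx hne hou hmu]
    exact mul_ne_zero hyo hC
  have hA : F A (0, y) = 0 := by
    rw [show F A (0, y) = _ from det_blowup_zero hne, hy, sub_self, zero_mul]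
  have himp : ∀ᶠ p in 𝓝 ((0 : 𝕜), y), p.1 ≠ 0 → F A p = 0 → F B p = 0 := by
    have hp0 : ∀ᶠ p : 𝕜 × (κ → 𝕜) in 𝓝 (0, y), ∀ j, (x + p.1 • p.2) j ≠ 0 :=
      eventually_all.2 fun j ↦ ContinuousAt.eventually_ne (by fun_prop) (by simp [hx])
    filter_upwards [hp0] with p hp ht
    rw [det_blowup_eq_zero_iff ht hker, det_blowup_eq_zero_iff ht hker]
    exact hAB _ fun j ↦ mul_ne_zero (inv_ne_zero ht) (hp j)
  have hB : F B (0, y) = 0 := eq_zero_of_eventually_imp_eq_zero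
    ((hF A).hasStrictFDerivAt one_ne_zero) hslope hA (hF B).continuousAt himp
  rw [show F B (0, y) = _ from det_blowup_zero hne, mul_eq_zero, or_iff_left hC] at hB
  exact sub_eq_zero.1 hB

theorem offDiag_mul_offDiag_eq_of_det_imp_det [DecidableEq κ] (hv : ∀ n j, v n j ≠ 0)
    (hom : LinearIndependent 𝕜 ![v o, v m])
    (hsingle : ∀ j, Pi.single j 1 ∉ span 𝕜 {v o, v m})
    (hspan : ∀ n ∉ ({o, m} : Finset ι), v n ∉ span 𝕜 {v o, v m})
    (hAB : ∀ z, (∀ j, z j ≠ 0) → (floquetForm v A z).det = 0 → (floquetForm v B z).det = 0) :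
    A o m * A m o = B o m * B m o := by
  have hrange : Set.range (fun s : ({o, m} : Finset ι) ↦ v s) = {v o, v m} := by
    ext; simp [eq_comm]
  obtain ⟨x, hker, hx⟩ := exists_dotProduct_eq_zero_and_forall_ne_zero
    (w := fun s : ({o, m} : Finset ι) ↦ v s)
    (f := Sum.elim (fun j ↦ Pi.single j 1) fun n : {n // n ∉ ({o, m} : Finset ι)} ↦ v n)
    (by rw [hrange]; rintro (j | n); exacts [hsingle j, hspan n n.2])
  refine eq_of_forall_mul_eq_imp (a := A o o) (b := A m m) (a' := B o o) (b' := B m m)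
    fun α β hαβ hα ↦ ?_
  obtain ⟨y, rfl, rfl⟩ := exists_dotProduct_eq_and_eq hom α β
  exact hyperbola_subset_of_det_imp_det hv hom (fun n hn ↦ hker ⟨n, hn⟩)
    (fun j ↦ by simpa using hx (.inl j)) (fun n hn ↦ hx (.inr ⟨n, hn⟩)) hAB hαβ hα

end Hyperbola

section Rho

variable {d : ℕ} {q : Fin d → ℕ} {j : Fin d}

theorem rho_eq_zpow (a : ℤ) : rho d q j a = rho d q j 1 ^ a := by
  rw [rho, rho, ← exp_int_mul]
  congr 1
  push_cast
  ring

theorem rho_ne_zero (a : ℤ) : rho d q j a ≠ 0 := exp_ne_zero _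

theorem rho_zero : rho d q j 0 = 1 := by rw [rho_eq_zpow, zpow_zero]

theorem rho_add (a b : ℤ) : rho d q j (a + b) = rho d q j a * rho d q j b := by
  rw [rho_eq_zpow, rho_eq_zpow a, rho_eq_zpow b, zpow_add₀ (rho_ne_zero 1)]

theorem norm_rho (a : ℤ) : ‖rho d q j a‖ = 1 := by
  rw [rho, norm_exp]
  simp [mul_assoc]

theorem rho_neg (a : ℤ) : rho d q j (-a) = starRingEnd ℂ (rho d q j a) := by
  rw [← inv_eq_conj (norm_rho a), rho_eq_zpow, rho_eq_zpow a, zpow_neg]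

theorem isPrimitiveRoot_rho_one (hq : 0 < q j) : IsPrimitiveRoot (rho d q j 1) (q j) := by
  simpa [rho] using isPrimitiveRoot_exp (q j) hq.ne'

theorem rho_eq_rho_iff (hq : 0 < q j) {a b : ℤ} :
    rho d q j a = rho d q j b ↔ a ≡ b [ZMOD q j] := by
  rw [Int.modEq_comm, Int.modEq_iff_dvd, ← (isPrimitiveRoot_rho_one hq).zpow_eq_one_iff_dvd,
    ← rho_eq_zpow, ← mul_left_inj' (rho_ne_zero b) (a := rho d q j (a - b)), one_mul, ← rho_add,
    sub_add_cancel]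

theorem rho_eq_one_iff (hq : 0 < q j) {a : ℤ} : rho d q j a = 1 ↔ (q j : ℤ) ∣ a := by
  rw [← rho_zero, rho_eq_rho_iff hq, Int.modEq_zero_iff_dvd]

theorem rho_pow (hq : 0 < q j) (a : ℤ) : rho d q j a ^ q j = 1 := by
  rw [rho_eq_zpow, ← zpow_natCast, zpow_comm, zpow_natCast, (isPrimitiveRoot_rho_one hq).pow_eq_one,
    one_zpow]

theorem rho_ne_rho_of_coprime {i : Fin d} (hi : 0 < q i) (hj : 0 < q j)
    (hij : (q i).Coprime (q j)) {a b : ℤ} (ha : rho d q i a ≠ 1) : rho d q i a ≠ rho d q j b := by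
  intro h
  have hpow := pow_gcd_eq_one.2 ⟨rho_pow hi a, h ▸ rho_pow hj b⟩
  exact ha (by rwa [hij.gcd_eq_one, pow_one] at hpow)

end Rho

section PlaneWave

/-- A point of the fundamental domain `W` as a lattice point. -/
def latticePoint {d : ℕ} {q : Fin d → ℕ} (n : Cell d q) (j : Fin d) : ℤ := (n j : ℕ)

/-- The character `n ↦ exp (2πi ∑ⱼ lⱼ nⱼ / qⱼ)` of `ℤ^d`, symmetric in the frequency `l` and the
point `n`. -/
def planeWave (d : ℕ) (q : Fin d → ℕ) (l n : Fin d → ℤ) : ℂ := ∏ j, rho d q j (l j * n j)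

variable {d : ℕ} {q : Fin d → ℕ} {l n n' : Fin d → ℤ}

theorem planeWave_comm : planeWave d q l n = planeWave d q n l := by
  simp only [planeWave, mul_comm]

theorem planeWave_add : planeWave d q l (n + n') = planeWave d q l n * planeWave d q l n' := by
  simp only [planeWave, Pi.add_apply, mul_add, rho_add, Finset.prod_mul_distrib]

theorem planeWave_neg_left : planeWave d q (-l) n = planeWave d q l (-n) := by
  simp only [planeWave, Pi.neg_apply, neg_mul_comm]

theorem planeWave_neg : planeWave d q l (-n) = starRingEnd ℂ (planeWave d q l n) := by
  simp only [planeWave, Pi.neg_apply, mul_neg, rho_neg, map_prod]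

theorem planeWave_single (k : Fin d) : planeWave d q l (Pi.single k 1) = rho d q k (l k) := by
  rw [planeWave, Finset.prod_eq_single k (fun j _ hj ↦ by
    rw [Pi.single_eq_of_ne hj, mul_zero, rho_zero]) (by simp), Pi.single_eq_same, mul_one]

theorem planeWave_congr (hq : ∀ j, 0 < q j) (h : ∀ j, n j ≡ n' j [ZMOD q j]) :
    planeWave d q l n = planeWave d q l n' :=
  Finset.prod_congr rfl fun j _ ↦ (rho_eq_rho_iff (hq j)).2 ((h j).mul_left _)

theorem sum_mul_planeWave_eq_zero (hq : ∀ j, 0 < q j) {k : Fin d} (hl : ¬(q k : ℤ) ∣ l k)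
    {f : Cell d q → ℂ} (hf : DependsOn f {k}ᶜ) :
    ∑ n, f n * planeWave d q l (latticePoint n) = 0 := by
  have (j : Fin d) : NeZero (q j) := ⟨(hq j).ne'⟩
  have hshift (n : Cell d q) : f (n + Pi.single k 1) *
      planeWave d q l (latticePoint (n + Pi.single k 1)) =
        rho d q k (l k) * (f n * planeWave d q l (latticePoint n)) := by
    have hfn : f (n + Pi.single k 1) = f n := hf fun j hj ↦ by
      rw [Pi.add_apply, Pi.single_eq_of_ne hj, add_zero]
    have hmod (j : Fin d) : latticePoint (n + Pi.single k 1) j ≡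
        (latticePoint n + Pi.single k 1 : Fin d → ℤ) j [ZMOD q j] := by
      rcases eq_or_ne j k with rfl | hj
      · simp [latticePoint, Fin.val_add, Int.ModEq]
      · simp [latticePoint, hj, Int.ModEq]
    rw [hfn, planeWave_congr hq hmod, planeWave_add, planeWave_single]
    ring
  have hinv := Equiv.sum_comp (Equiv.addRight (Pi.single k 1))
    fun n : Cell d q ↦ f n * planeWave d q l (latticePoint n)
  simp only [Equiv.coe_addRight, hshift, ← Finset.mul_sum] at hinv
  by_contra hne
  exact hl ((rho_eq_one_iff (hq k)).1 ((mul_eq_right₀ hne).1 hinv))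

theorem sum_planeWave_eq_zero (hq : ∀ j, 0 < q j) {k : Fin d} (hl : ¬(q k : ℤ) ∣ l k) :
    ∑ n : Cell d q, planeWave d q l (latticePoint n) = 0 := by
  simpa using sum_mul_planeWave_eq_zero hq hl (f := fun _ ↦ 1) fun _ _ _ ↦ rfl

end PlaneWave

section Fourier

variable {d : ℕ} {q : Fin d → ℕ} {V : (Fin d → ℤ) → ℝ} {n : Fin d → ℤ}

theorem latticePoint_modEq_iff {a b : Cell d q} :
    (∀ j, latticePoint a j ≡ latticePoint b j [ZMOD q j]) ↔ a = b := by
  refine ⟨fun h ↦ funext fun j ↦ Fin.ext ?_, fun h j ↦ h ▸ Int.ModEq.rfl⟩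
  exact (Int.natCast_modEq_iff.1 (h j)).eq_of_lt_of_lt (a j).2 (b j).2

theorem exists_latticePoint_modEq (hq : ∀ j, 0 < q j) (n : Fin d → ℤ) :
    ∃ a : Cell d q, ∀ j, latticePoint a j ≡ n j [ZMOD q j] := by
  refine ⟨fun j ↦ ⟨(n j).natMod (q j), Int.natMod_lt (hq j).ne'⟩, fun j ↦ ?_⟩
  have hne : (q j : ℤ) ≠ 0 := by exact_mod_cast (hq j).ne'
  simp only [latticePoint, Int.natMod, Int.toNat_of_nonneg (Int.emod_nonneg _ hne)]
  exact Int.mod_modEq _ _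

theorem IsPeriodicPotential.congr (hV : IsPeriodicPotential d q V) {n n' : Fin d → ℤ}
    (h : ∀ j, n j ≡ n' j [ZMOD q j]) : V n = V n' := by
  simpa using (hV n (n' - n) fun j ↦ (Int.modEq_iff_dvd.1 (h j))).symm

theorem dft_eq_sum_planeWave (V : (Fin d → ℤ) → ℝ) (l : Fin d → ℤ) :
    dft d q V l = (1 / ∏ j, (q j : ℂ)) *
      ∑ n : Cell d q, V (latticePoint n) * planeWave d q (-l) (latticePoint n) := by
  have hexp (n : Cell d q) : planeWave d q (-l) (latticePoint n) =
      exp (-(2 * Real.pi * I) * ∑ j, (l j : ℂ) * ((n j : ℕ) : ℂ) / (q j : ℂ)) := by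
    rw [Finset.mul_sum, exp_sum]
    refine Finset.prod_congr rfl fun j _ ↦ ?_
    rw [rho, latticePoint]
    congr 1
    simp only [Pi.neg_apply]
    push_cast
    ring
  simp only [hexp]
  rfl

theorem dft_neg (V : (Fin d → ℤ) → ℝ) (l : Fin d → ℤ) :
    dft d q V (-l) = starRingEnd ℂ (dft d q V l) := by
  simp only [dft_eq_sum_planeWave, planeWave_neg_left (l := l), planeWave_neg, neg_neg, map_mul,
    map_sum, map_div₀, map_one, map_prod, map_natCast, conj_ofReal, conj_conj]

theorem IsPeriodicPotential.sum_dft_mul_planeWave (hq : ∀ j, 0 < q j)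
    (hV : IsPeriodicPotential d q V) (n : Fin d → ℤ) :
    ∑ m : Cell d q, dft d q V (latticePoint m) * planeWave d q (latticePoint m) n = V n := by
  obtain ⟨a, ha⟩ := exists_latticePoint_modEq hq n
  have hQ : ∏ j, (q j : ℂ) ≠ 0 := Finset.prod_ne_zero_iff.2 fun j _ ↦ by exact_mod_cast (hq j).ne'
  have hortho (b : Cell d q) : ∑ m : Cell d q,
      planeWave d q (latticePoint a - latticePoint b) (latticePoint m) =
        if b = a then ∏ j, (q j : ℂ) else 0 := by
    split_ifs with hba
    · simp [hba, planeWave, rho_zero]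
    · obtain ⟨k, hk⟩ : ∃ k, ¬latticePoint b k ≡ latticePoint a k [ZMOD q k] := by
        simpa only [← latticePoint_modEq_iff, not_forall] using hba
      exact sum_planeWave_eq_zero hq (k := k) (mt Int.modEq_iff_dvd.2 hk)
  calc ∑ m : Cell d q, dft d q V (latticePoint m) * planeWave d q (latticePoint m) n
      = (1 / ∏ j, (q j : ℂ)) * ∑ b : Cell d q, V (latticePoint b) * ∑ m : Cell d q,
          planeWave d q (latticePoint a - latticePoint b) (latticePoint m) := by
        simp only [← planeWave_congr hq ha, dft_eq_sum_planeWave, planeWave_neg_left,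
          Finset.mul_sum, Finset.sum_mul]
        rw [Finset.sum_comm]
        refine Finset.sum_congr rfl fun b _ ↦ Finset.sum_congr rfl fun m _ ↦ ?_
        rw [planeWave_comm (l := latticePoint a - latticePoint b), sub_eq_add_neg, planeWave_add]
        ring
    _ = V (latticePoint a) := by
        simp only [hortho, mul_ite, mul_zero, Fintype.sum_ite_eq']
        field_simp
    _ = V n := by rw [hV.congr ha]

end Fourier

section Floquet

open Submodule

theorem eq_zero_or_eq_zero_of_norm_add_mul_eq {c e w₁ w₂ w₃ : ℂ} {r R : ℝ}
    (h₁₂ : w₁ ≠ w₂) (h₁₃ : w₁ ≠ w₃) (h₂₃ : w₂ ≠ w₃)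
    (hw₁ : ‖w₁‖ = r) (hw₂ : ‖w₂‖ = r) (hw₃ : ‖w₃‖ = r)
    (h₁ : ‖c + e * w₁‖ = R) (h₂ : ‖c + e * w₂‖ = R) (h₃ : ‖c + e * w₃‖ = R) : c = 0 ∨ e = 0 := by
  -- The `c + e * wᵢ` lie on circles centered at `0` and at `c`, which meet in at most two points.
  by_contra! ⟨hc, he⟩
  have hinj {w w' : ℂ} (h : c + e * w = c + e * w') : w = w' :=
    mul_left_cancel₀ he (add_left_cancel h)
  have hcircle {w : ℂ} (hw : ‖w‖ = r) : dist (c + e * w) c = ‖e‖ * r := by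
    rw [dist_eq, add_sub_cancel_left, norm_mul, hw]
  rcases EuclideanGeometry.eq_of_dist_eq_of_dist_eq_of_finrank_eq_two finrank_real_complex hc.symm
    (mt hinj h₁₂) (dist_zero_right _ |>.trans h₁) (dist_zero_right _ |>.trans h₂)
    (dist_zero_right _ |>.trans h₃) (hcircle hw₁) (hcircle hw₂) (hcircle hw₃) with h | h
  exacts [h₁₃ (hinj h).symm, h₂₃ (hinj h).symm]

/-- The preimage of the Fermi variety `F_lam(V)` under `z ↦ (z₁^q₁, …, z_d^q_d)`. -/
def fermiVariety (d : ℕ) (q : Fin d → ℕ) (V : (Fin d → ℤ) → ℝ) (lam : ℂ) : Set (Fin d → ℂ) :=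
  {z | (∀ j, z j ≠ 0) ∧ floquetDet d q V z lam = 0}

/-- The character attached to row `n` of the Floquet matrix, with values `e^{2πi nⱼ/qⱼ}`. -/
def rowCharacter {d : ℕ} {q : Fin d → ℕ} (n : Cell d q) (j : Fin d) : ℂ :=
  rho d q j (latticePoint n j)

/-- The matrix of multiplication by `V - lam` in Fourier space. -/
def fourierMatrix (d : ℕ) (q : Fin d → ℕ) (V : (Fin d → ℤ) → ℝ) (lam : ℂ) :
    Matrix (Cell d q) (Cell d q) ℂ :=
  Matrix.of (fun n n' ↦ dft d q V (latticePoint n - latticePoint n')) - lam • 1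

variable {d : ℕ} {q : Fin d → ℕ} {V Y : (Fin d → ℤ) → ℝ} {m n : Cell d q} {k k' : Fin d}

theorem rowCharacter_ne_zero (n : Cell d q) (j : Fin d) : rowCharacter n j ≠ 0 := rho_ne_zero _

theorem rowCharacter_injective (hq : ∀ j, 0 < q j) :
    Function.Injective (rowCharacter : Cell d q → Fin d → ℂ) := fun _ _ h ↦
  latticePoint_modEq_iff.1 fun j ↦ (rho_eq_rho_iff (hq j)).1 (congrFun h j)

theorem natCast_not_dvd_latticePoint (hm : (m k : ℕ) ≠ 0) :
    ¬(q k : ℤ) ∣ latticePoint m k := by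
  rw [latticePoint, Int.natCast_dvd_natCast]
  exact Nat.not_dvd_of_pos_of_lt (Nat.pos_of_ne_zero hm) (m k).2

theorem rowCharacter_ne_one (hq : ∀ j, 0 < q j) (hm : (m k : ℕ) ≠ 0) :
    rowCharacter m k ≠ 1 :=
  mt (rho_eq_one_iff (hq k)).1 (natCast_not_dvd_latticePoint hm)

theorem rowCharacter_apply_ne_apply (hq : ∀ j, 0 < q j)
    (hco : ∀ i j, i ≠ j → (q i).Coprime (q j)) (hk : k ≠ k') (hm : rowCharacter m k ≠ 1) :
    rowCharacter m k ≠ rowCharacter m k' :=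
  rho_ne_rho_of_coprime (hq k) (hq k') (hco k k' hk) hm

theorem linearIndependent_one_rowCharacter (hq : ∀ j, 0 < q j)
    (hco : ∀ i j, i ≠ j → (q i).Coprime (q j)) (hk : k ≠ k') (hm : rowCharacter m k ≠ 1) :
    LinearIndependent ℂ ![1, rowCharacter m] := by
  have : Nonempty (Fin d) := ⟨k⟩
  refine (LinearIndependent.pair_iff' one_ne_zero).2 fun c hc ↦ ?_
  exact rowCharacter_apply_ne_apply hq hco hk hm (by simp [← hc])

theorem single_notMem_span_one_rowCharacter (hd : 3 ≤ d) (hq : ∀ j, 0 < q j)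
    (hco : ∀ i j, i ≠ j → (q i).Coprime (q j)) (hk : k ≠ k') (hm : rowCharacter m k ≠ 1)
    (hm' : rowCharacter m k' ≠ 1) (j : Fin d) :
    Pi.single j 1 ∉ span ℂ {1, rowCharacter m} := by
  obtain ⟨k'', hk₁, hk₂⟩ := Fin.exists_ne_and_ne_of_two_lt k k' hd
  have hne {i i' : Fin d} := rowCharacter_apply_ne_apply (m := m) (k := i) (k' := i') hq hco
  rcases eq_or_ne k j with rfl | hkj
  · exact single_notMem_span_one_pair hk.symm hk₁ (hne hk₂.symm hm')
  · rcases eq_or_ne k' j with rfl | hkj'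
    · exact single_notMem_span_one_pair hk hk₂ (hne hk₁.symm hm)
    · exact single_notMem_span_one_pair hkj hkj' (hne hk hm)

theorem eq_one_or_eq_of_rowCharacter_mem_span (hd : 3 ≤ d) (hq : ∀ j, 0 < q j)
    (hco : ∀ i j, i ≠ j → (q i).Coprime (q j)) (hk : k ≠ k') (hm : rowCharacter m k ≠ 1)
    (hm' : rowCharacter m k' ≠ 1) (h : rowCharacter n ∈ span ℂ {1, rowCharacter m}) :
    rowCharacter n = 1 ∨ n = m := by
  obtain ⟨c, e, h⟩ := mem_span_pair.1 h
  have hval (j : Fin d) : c + e * rowCharacter m j = rowCharacter n j := by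
    simpa using congrFun h j
  have hne {i j : Fin d} := rowCharacter_apply_ne_apply (m := m) (k := i) (k' := j) hq hco
  have hnorm (j : Fin d) : ‖c + e * rowCharacter m j‖ = 1 := hval j ▸ norm_rho _
  obtain ⟨k'', hk₁, hk₂⟩ := Fin.exists_ne_and_ne_of_two_lt k k' hd
  rcases eq_zero_or_eq_zero_of_norm_add_mul_eq (hne hk hm) (hne hk₁.symm hm) (hne hk₂.symm hm')
    (norm_rho _) (norm_rho _) (norm_rho _) (hnorm k) (hnorm k') (hnorm k'') with rfl | rfl
  · have he (j : Fin d) : e ^ q j = 1 := by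
      have := congrArg (· ^ q j) (hval j)
      simpa only [zero_add, mul_pow, rowCharacter, rho_pow (hq j), mul_one] using this
    have he1 : e = 1 := by
      simpa only [(hco k k' hk).gcd_eq_one, pow_one] using pow_gcd_eq_one.2 ⟨he k, he k'⟩
    exact .inr (rowCharacter_injective hq (funext fun j ↦ by rw [← hval, he1, zero_add, one_mul]))
  · simp only [zero_mul, add_zero] at hval
    have hc : rowCharacter n k = 1 := by
      by_contra hc
      exact rowCharacter_apply_ne_apply hq hco hk hc ((hval k).symm.trans (hval k'))
    exact .inl (funext fun j ↦ by rw [← hval, hval k, hc, Pi.one_apply])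

theorem floquetDet_eq_det_floquetForm (z : Fin d → ℂ) (lam : ℂ) :
    floquetDet d q V z lam = (floquetForm rowCharacter (fourierMatrix d q V lam) z).det := by
  rw [floquetForm, fourierMatrix, ← add_sub_assoc]
  rfl

theorem fourierMatrix_mul_fourierMatrix {n n' : Cell d q} (h : n ≠ n') (lam : ℂ) :
    fourierMatrix d q V lam n n' * fourierMatrix d q V lam n' n =
      (‖dft d q V (latticePoint n' - latticePoint n)‖ : ℂ) ^ 2 := by
  have hentry {a b : Cell d q} (hab : a ≠ b) :
      fourierMatrix d q V lam a b = dft d q V (latticePoint a - latticePoint b) := by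
    simp [fourierMatrix, hab]
  rw [hentry h, hentry h.symm, ← neg_sub (latticePoint n'), dft_neg, conj_mul']

theorem norm_dft_eq_of_fermiVariety_subset (hd : 3 ≤ d) (hq : ∀ j, 0 < q j)
    (hco : ∀ i j, i ≠ j → (q i).Coprime (q j)) {lam mu : ℂ}
    (hVY : fermiVariety d q V lam ⊆ fermiVariety d q Y mu) (hk : k ≠ k')
    (hm : (m k : ℕ) ≠ 0) (hm' : (m k' : ℕ) ≠ 0) :
    ‖dft d q V (latticePoint m)‖ = ‖dft d q Y (latticePoint m)‖ := by
  have hw := rowCharacter_ne_one hq hm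
  have hw' := rowCharacter_ne_one hq hm'
  let o : Cell d q := fun j ↦ ⟨0, hq j⟩
  have ho : latticePoint o = 0 := rfl
  have hvo : rowCharacter o = 1 := funext fun j ↦ rho_zero
  have hom : o ≠ m := fun h ↦ hm (h ▸ rfl)
  have hspan : ∀ n ∉ ({o, m} : Finset (Cell d q)),
      rowCharacter n ∉ span ℂ {rowCharacter o, rowCharacter m} := by
    rw [hvo]
    intro n hn hmem
    rcases eq_one_or_eq_of_rowCharacter_mem_span hd hq hco hk hw hw' hmem with h | rfl
    · exact hn (by simp [rowCharacter_injective hq (h.trans hvo.symm)])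
    · exact hn (by simp)
  have hdet (z : Fin d → ℂ) (hz : ∀ j, z j ≠ 0)
      (hV : (floquetForm rowCharacter (fourierMatrix d q V lam) z).det = 0) :
      (floquetForm rowCharacter (fourierMatrix d q Y mu) z).det = 0 := by
    rw [← floquetDet_eq_det_floquetForm] at hV ⊢
    exact (hVY ⟨hz, hV⟩).2
  have hoffDiag := offDiag_mul_offDiag_eq_of_det_imp_det rowCharacter_ne_zero
    (hvo ▸ linearIndependent_one_rowCharacter hq hco hk hw)
    (hvo ▸ single_notMem_span_one_rowCharacter hd hq hco hk hw hw') hspan hdet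
  simpa [fourierMatrix_mul_fourierMatrix hom, ho, ← ofReal_pow] using hoffDiag

end Floquet

section Separable

variable {r d : ℕ} {D : Fin r → ℕ} {hsum : ∑ j, D j = d} {q : Fin d → ℕ} {V : (Fin d → ℤ) → ℝ}

/-- The enumeration of the `d` coordinates block by block. -/
def blockEquiv (D : Fin r → ℕ) (hsum : ∑ j, D j = d) : (Σ j, Fin (D j)) ≃ Fin d :=
  finSigmaFinEquiv.trans (finCongr hsum)

/-- The block containing the coordinate `k`. -/
def blockIndex (D : Fin r → ℕ) (hsum : ∑ j, D j = d) (k : Fin d) : Fin r :=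
  ((blockEquiv D hsum).symm k).1

theorem blockEquiv_mk (j : Fin r) (i : Fin (D j)) :
    blockEquiv D hsum ⟨j, i⟩ = blockEmbed D hsum j i := by
  have hfilter : Finset.univ.filter (· < j) = Finset.univ.map (Fin.castLEEmb j.2.le) := by
    ext k
    simp only [Finset.mem_filter_univ, Finset.mem_map, Finset.mem_univ, true_and]
    exact ⟨fun h ↦ ⟨⟨k, h⟩, rfl⟩, by rintro ⟨k, rfl⟩; exact k.2⟩
  apply Fin.ext
  simp only [blockEquiv, blockEmbed, hfilter, Finset.sum_map]
  exact finSigmaFinEquiv_apply ⟨j, i⟩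

theorem blockIndex_blockEmbed (j : Fin r) (i : Fin (D j)) :
    blockIndex D hsum (blockEmbed D hsum j i) = j := by
  rw [blockIndex, ← blockEquiv_mk, Equiv.symm_apply_apply]

theorem blockEmbed_injective (j : Fin r) : Function.Injective (blockEmbed D hsum j) := by
  intro i i' h
  simpa only [← blockEquiv_mk, EmbeddingLike.apply_eq_iff_eq, Sigma.mk.injEq, heq_eq_eq,
    true_and] using h

theorem exists_blockEmbed_eq {j : Fin r} {k : Fin d} (hk : blockIndex D hsum k = j) :
    ∃ i, blockEmbed D hsum j i = k := by
  obtain ⟨⟨j', i⟩, rfl⟩ := (blockEquiv D hsum).surjective k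
  rw [blockEquiv_mk, blockIndex_blockEmbed] at hk
  subst hk
  exact ⟨i, (blockEquiv_mk j' i).symm⟩

theorem isSeparablePotential_iff :
    IsSeparablePotential d D hsum V ↔ ∃ F : Fin r → (Fin d → ℤ) → ℝ,
      (∀ j, DependsOn (F j) {k | blockIndex D hsum k = j}) ∧ ∀ n, V n = ∑ j, F j n := by
  constructor
  · rintro ⟨W, hW⟩
    refine ⟨fun j n ↦ W j fun i ↦ n (blockEmbed D hsum j i), fun j n n' h ↦ ?_, hW⟩
    exact congrArg (W j) (funext fun i ↦ h _ (blockIndex_blockEmbed j i))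
  · rintro ⟨F, hF, hV⟩
    refine ⟨fun j t ↦ F j (Function.extend (blockEmbed D hsum j) t 0), fun n ↦ ?_⟩
    refine (hV n).trans (Finset.sum_congr rfl fun j _ ↦ hF j fun k hk ↦ ?_)
    obtain ⟨i, rfl⟩ := exists_blockEmbed_eq hk
    rw [(blockEmbed_injective j).extend_apply]

theorem IsSeparablePotential.dft_eq_zero (hV : IsSeparablePotential d D hsum V)
    (hq : ∀ j, 0 < q j) {l : Fin d → ℤ} {k k' : Fin d}
    (hk : blockIndex D hsum k ≠ blockIndex D hsum k') (hl : ¬(q k : ℤ) ∣ l k)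
    (hl' : ¬(q k' : ℤ) ∣ l k') : dft d q V l = 0 := by
  obtain ⟨F, hF, hVF⟩ := isSeparablePotential_iff.1 hV
  have hmiss {j : Fin r} {i : Fin d} (hi : blockIndex D hsum i ≠ j) (hli : ¬(q i : ℤ) ∣ l i) :
      ∑ n : Cell d q, (F j (latticePoint n) : ℂ) * planeWave d q (-l) (latticePoint n) = 0 := by
    refine sum_mul_planeWave_eq_zero hq (k := i) (by simpa using hli) fun n n' h ↦ ?_
    refine congrArg ofReal (hF j fun i' hi' ↦ ?_)
    rw [latticePoint, latticePoint, h i' fun h ↦ hi (h ▸ hi')]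
  have hblock (j : Fin r) :
      ∑ n : Cell d q, (F j (latticePoint n) : ℂ) * planeWave d q (-l) (latticePoint n) = 0 := by
    by_cases hj : blockIndex D hsum k = j
    · exact hmiss (fun h ↦ hk (hj.trans h.symm)) hl'
    · exact hmiss hj hl
  simp only [dft_eq_sum_planeWave, hVF, ofReal_sum, Finset.sum_mul]
  rw [Finset.sum_comm, Finset.sum_eq_zero fun j _ ↦ hblock j, mul_zero]

theorem dependsOn_planeWave_latticePoint {m : Cell d q} {s : Set (Fin d)}
    (hm : ∀ k, (m k : ℕ) ≠ 0 → k ∈ s) : DependsOn (planeWave d q (latticePoint m)) s := by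
  refine fun n n' h ↦ Finset.prod_congr rfl fun k _ ↦ ?_
  rcases eq_or_ne (m k : ℕ) 0 with hk | hk
  · simp [latticePoint, hk]
  · rw [h k (hm k hk)]

theorem isSeparablePotential_of_dft_eq_zero (hd : 0 < d) (hq : ∀ j, 0 < q j)
    (hV : IsPeriodicPotential d q V)
    (h : ∀ (m : Cell d q) (k k' : Fin d), blockIndex D hsum k ≠ blockIndex D hsum k' →
      (m k : ℕ) ≠ 0 → (m k' : ℕ) ≠ 0 → dft d q V (latticePoint m) = 0) :
    IsSeparablePotential d D hsum V := by
  have hblock (m : Cell d q) : ∃ j, dft d q V (latticePoint m) ≠ 0 →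
      ∀ k, (m k : ℕ) ≠ 0 → k ∈ {k | blockIndex D hsum k = j} := by
    by_cases hm : ∃ k, (m k : ℕ) ≠ 0
    · obtain ⟨k', hk'⟩ := hm
      refine ⟨blockIndex D hsum k', fun hdft k hk ↦ ?_⟩
      by_contra hne
      exact hdft (h m k k' hne hk hk')
    · exact ⟨blockIndex D hsum ⟨0, hd⟩, fun _ k hk ↦ absurd ⟨k, hk⟩ hm⟩
  choose b hb using hblock
  refine isSeparablePotential_iff.2 ⟨fun j n ↦ (∑ m : Cell d q with b m = j,
    dft d q V (latticePoint m) * planeWave d q (latticePoint m) n).re, fun j n n' hn ↦ ?_,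
    fun n ↦ ?_⟩
  · refine congrArg re (Finset.sum_congr rfl fun m hm ↦ ?_)
    obtain rfl : b m = j := (Finset.mem_filter.1 hm).2
    rcases eq_or_ne (dft d q V (latticePoint m)) 0 with h0 | h0
    · rw [h0, zero_mul, zero_mul]
    · rw [dependsOn_planeWave_latticePoint (hb m h0) hn]
  · rw [← re_sum, Finset.sum_fiberwise, hV.sum_dft_mul_planeWave hq, ofReal_re]

end Separable

theorem fermi_isospectral_of_separable_is_separable_general {d r : ℕ} (hd : 3 ≤ d)
    {q : Fin d → ℕ} (hq : ∀ j, 0 < q j) (hco : ∀ i j, i ≠ j → (q i).Coprime (q j))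
    {D : Fin r → ℕ} {hsum : ∑ j, D j = d} {V Y : (Fin d → ℤ) → ℝ}
    (hVper : IsPeriodicPotential d q V) {lam mu : ℂ}
    (hVY : fermiVariety d q V lam ⊆ fermiVariety d q Y mu)
    (hYsep : IsSeparablePotential d D hsum Y) : IsSeparablePotential d D hsum V := by
  refine isSeparablePotential_of_dft_eq_zero (by lia) hq hVper fun m k k' hk hm hm' ↦ ?_
  have hY : dft d q Y (latticePoint m) = 0 :=
    hYsep.dft_eq_zero hq hk (natCast_not_dvd_latticePoint hm) (natCast_not_dvd_latticePoint hm')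
  have hnorm : ‖dft d q V (latticePoint m)‖ = ‖dft d q Y (latticePoint m)‖ :=
    norm_dft_eq_of_fermiVariety_subset hd hq hco hVY (ne_of_apply_ne _ hk) hm hm'
  rwa [hY, norm_zero, norm_eq_zero] at hnorm

/-- Theorem 1.3: if `V` and `Y` are Fermi isospectral and `Y` is
`(d₁,…,d_r)` separable, then `V` is `(d₁,…,d_r)` separable. -/
theorem fermi_isospectral_of_separable_is_separable
    (d r : ℕ) (hd : 3 ≤ d) (hr : 2 ≤ r)
    (q : Fin d → ℕ) (hq : ∀ j, 0 < q j)
    (hco : ∀ i j : Fin d, i ≠ j → Nat.Coprime (q i) (q j))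
    (D : Fin r → ℕ) (hD : ∀ j, 1 ≤ D j) (hsum : ∑ j, D j = d)
    (V Y : (Fin d → ℤ) → ℝ)
    (hVper : IsPeriodicPotential d q V) (hYper : IsPeriodicPotential d q Y)
    (hFermi : FermiIsospectral d q V Y)
    (hYsep : IsSeparablePotential d D hsum Y) :
    IsSeparablePotential d D hsum V := by
  obtain ⟨lam, hset⟩ := hFermi
  exact fermi_isospectral_of_separable_is_separable_general hd hq hco hVper hset.subset hYsep

end
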